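/- Let 1 ≤ p < n, let r be an integer with p ≤ r < n such that |λ_p|/2 ≤ λ_p − λ_{r+1}, set x := max_{1≤i,j≤r} |u_iᵀ E u_j|, and assume 0 < 4‖E‖ ≤ δ_p := λ_p − λ_{p+1} ≤ |λ_p|/4. Then M₁ ≤ 70 ( (‖E‖/|λ_p|)·log(6σ₁/δ_p) + r²x/δ_p ). -/

import Mathlib

open Matrix

/-- The spectral norm (ℓ²→ℓ² operator norm) of a matrix. -/
noncomputable def specNorm {𝕜 : Type*} [RCLike 𝕜] {m n : ℕ}
    (M : Matrix (Fin m) (Fin n) 𝕜) : ℝ :=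
  ‖LinearMap.toContinuousLinearMap (Matrix.toEuclideanLin M)‖

/-- The resolvent `(zI − A)⁻¹` of a real matrix `A`, regarded as a complex matrix. -/
noncomputable def res {n : ℕ} (A : Matrix (Fin n) (Fin n) ℝ) (z : ℂ) :
    Matrix (Fin n) (Fin n) ℂ :=
  (z • (1 : Matrix (Fin n) (Fin n) ℂ) - A.map Complex.ofReal)⁻¹

/-!
In an eigenbasis of `A` the integrand is `‖D * F * D‖`, where `F` is the matrix of `E` and `D` is
diagonal with entries `(z - λᵢ)⁻¹`. Split the indices into `i ≤ r` and `i > r`. On the first block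
the entries of `F` are at most `x` and `|z - λᵢ| ≥ √((δ_p / 2)² + t²)`, which integrates to a
multiple of `r² * x / δ_p`. Beyond `r` the choice of `r` gives
`|x₀ - λᵢ| ≥ |λ_p| / 2 - δ_p / 2 ≥ 3 * |λ_p| / 8`, so it is enough to bound `F` by `‖E‖`: the two
mixed blocks cost `‖E‖ / |λ_p|` times the integral of `1 / √((δ_p / 2)² + t²)`, an `arsinh` that
produces the logarithm, and the last block costs a multiple of `‖E‖ / |λ_p|`, absorbed because the
logarithm is at least `1`.
-/

section Scalar

open Real

lemma integral_inv_sqrt_sq_add_sq {a b c : ℝ} (hc : 0 < c) :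
    ∫ t in a..b, (√(c ^ 2 + t ^ 2))⁻¹ = arsinh (b / c) - arsinh (a / c) := by
  have hscale (t : ℝ) : (√(c ^ 2 + t ^ 2))⁻¹ = c⁻¹ * (√(1 + (t / c) ^ 2))⁻¹ := by
    have : c ^ 2 + t ^ 2 = c ^ 2 * (1 + (t / c) ^ 2) := by field_simp
    rw [this, sqrt_mul (sq_nonneg c), sqrt_sq hc.le, mul_inv]
  have hderiv (t : ℝ) : HasDerivAt (fun t ↦ arsinh (t / c)) (√(c ^ 2 + t ^ 2))⁻¹ t := by
    simpa [hscale, mul_comm] using ((hasDerivAt_id' t).div_const c).arsinh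
  refine intervalIntegral.integral_eq_sub_of_hasDerivAt (fun t _ ↦ hderiv t) ?_
  exact Continuous.intervalIntegrable (by fun_prop (disch := intro; positivity)) _ _

lemma integral_inv_sq_add_sq_le_pi_div {a b c : ℝ} (hc : 0 < c) :
    ∫ t in a..b, (c ^ 2 + t ^ 2)⁻¹ ≤ π / c := by
  rw [integral_inv_sq_add_sq hc.ne', div_eq_inv_mul π]
  refine mul_le_mul_of_nonneg_left ?_ (inv_nonneg.2 hc.le)
  linarith [arctan_lt_pi_div_two (b / c), neg_pi_div_two_lt_arctan (a / c)]

lemma arsinh_le_log_one_add_two_mul {y : ℝ} (hy : 0 ≤ y) : arsinh y ≤ log (1 + 2 * y) := by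
  refine log_le_log (by positivity) ?_
  have : √(1 + y ^ 2) ≤ 1 + y := sqrt_le_iff.2 ⟨by positivity, by nlinarith⟩
  linarith

lemma arsinh_four_mul_le_two_mul_log {s : ℝ} (hs : 1 ≤ s) :
    arsinh (4 * s) ≤ 2 * log (6 * s) :=
  calc arsinh (4 * s) ≤ log (1 + 2 * (4 * s)) := arsinh_le_log_one_add_two_mul (by positivity)
    _ ≤ log ((6 * s) ^ 2) := log_le_log (by positivity) (by nlinarith)
    _ = 2 * log (6 * s) := by rw [log_pow, Nat.cast_ofNat]

lemma half_gap_le_abs_midpoint_sub {f : ℕ → ℝ} {s : Set ℕ} (hf : AntitoneOn f s) {p i : ℕ}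
    (hp : p ∈ s) (hp' : p + 1 ∈ s) (hi : i ∈ s) :
    (f p - f (p + 1)) / 2 ≤ |f p - (f p - f (p + 1)) / 2 - f i| := by
  rcases le_or_gt i p with hip | hpi
  · exact le_abs.2 (Or.inr (by linarith [hf hi hp hip]))
  · exact le_abs.2 (Or.inl (by linarith [hf hp' hi hpi]))

lemma norm_inv_add_mul_I_sub_le {x₀ l c : ℝ} (hc : 0 < c) (h : c ≤ |x₀ - l|) (t : ℝ) :
    ‖(x₀ + t * Complex.I - l : ℂ)⁻¹‖ ≤ (√(c ^ 2 + t ^ 2))⁻¹ := by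
  have hz : (x₀ + t * Complex.I - l : ℂ) = (x₀ - l : ℝ) + t * Complex.I := by
    push_cast; ring
  rw [norm_inv, hz, Complex.norm_add_mul_I, ← sq_abs (x₀ - l)]
  gcongr

end Scalar

section L2OpNorm

open scoped Matrix.Norms.L2Operator

variable {m n 𝕜 : Type*} [Fintype m] [Fintype n] [DecidableEq n] [RCLike 𝕜]

lemma l2_opNorm_single [DecidableEq m] (i : m) (j : n) (c : 𝕜) : ‖single i j c‖ = ‖c‖ := by
  rw [← mul_self_inj (norm_nonneg _) (norm_nonneg _), ← l2_opNorm_conjTranspose_mul_self,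
    conjTranspose_single, single_mul_single_same, ← diagonal_single, l2_opNorm_diagonal,
    Pi.norm_single, norm_mul, norm_star]

lemma l2_opNorm_le_sum_norm (M : Matrix m n 𝕜) : ‖M‖ ≤ ∑ i, ∑ j, ‖M i j‖ := by
  classical
  calc ‖M‖ = ‖∑ i, ∑ j, single i j (M i j)‖ := by rw [← matrix_eq_sum_single M]
    _ ≤ ∑ i, ∑ j, ‖single i j (M i j)‖ := norm_sum_le_of_le _ fun _ _ ↦ norm_sum_le _ _
    _ = ∑ i, ∑ j, ‖M i j‖ := by simp only [l2_opNorm_single]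

lemma l2_opNorm_le_card_mul_card_mul {M : Matrix m n 𝕜} {s : Finset m} {t : Finset n} {c : ℝ}
    (hsupp : ∀ i j, M i j ≠ 0 → i ∈ s ∧ j ∈ t) (hc : ∀ i ∈ s, ∀ j ∈ t, ‖M i j‖ ≤ c) :
    ‖M‖ ≤ s.card * t.card * c :=
  calc ‖M‖ ≤ ∑ i, ∑ j, ‖M i j‖ := l2_opNorm_le_sum_norm M
    _ = ∑ q : m × n, ‖M q.1 q.2‖ := (Fintype.sum_prod_type' fun i j ↦ ‖M i j‖).symm
    _ = ∑ q ∈ s ×ˢ t, ‖M q.1 q.2‖ := by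
      refine (Finset.sum_subset (Finset.subset_univ _) fun q _ hq ↦ ?_).symm
      rw [norm_eq_zero]
      exact not_imp_comm.1 (hsupp q.1 q.2) (mt Finset.mem_product.2 hq)
    _ ≤ (s ×ˢ t).card • c := Finset.sum_le_card_nsmul _ _ _ fun q hq ↦
      hc _ (Finset.mem_product.1 hq).1 _ (Finset.mem_product.1 hq).2
    _ = s.card * t.card * c := by rw [Finset.card_product, nsmul_eq_mul, Nat.cast_mul]

lemma norm_eigenvalue_le_l2_opNorm {A : Matrix n n 𝕜} {v : n → 𝕜} {c : 𝕜} (hv : v ≠ 0)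
    (h : A *ᵥ v = c • v) : ‖c‖ ≤ ‖A‖ := by
  have hpos : 0 < ‖WithLp.toLp 2 v‖ := norm_pos_iff.2 (by simpa using hv)
  have hAv : ‖WithLp.toLp 2 (A *ᵥ v)‖ ≤ ‖A‖ * ‖WithLp.toLp 2 v‖ :=
    l2_opNorm_mulVec A (WithLp.toLp 2 v)
  rw [h, WithLp.toLp_smul, norm_smul] at hAv
  exact le_of_mul_le_mul_right hAv hpos

lemma norm_sq_eq_norm_sq_re_add_norm_sq_im (v : m → ℂ) :
    ‖WithLp.toLp 2 v‖ ^ 2 = ‖WithLp.toLp 2 fun i ↦ (v i).re‖ ^ 2 +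
      ‖WithLp.toLp 2 fun i ↦ (v i).im‖ ^ 2 := by
  simp only [EuclideanSpace.norm_sq_eq, Real.norm_eq_abs, sq_abs, ← Finset.sum_add_distrib]
  exact Finset.sum_congr rfl fun i _ ↦ by rw [Complex.sq_norm, Complex.normSq_apply]; ring

lemma l2_opNorm_map_ofReal_le (M : Matrix m n ℝ) : ‖M.map Complex.ofReal‖ ≤ ‖M‖ := by
  refine ContinuousLinearMap.opNorm_le_bound _ (norm_nonneg _) fun v ↦
    (sq_le_sq₀ (norm_nonneg _) (by positivity)).1 ?_
  have hM (w : n → ℝ) : ‖WithLp.toLp 2 (M *ᵥ w)‖ ^ 2 ≤ ‖M‖ ^ 2 * ‖WithLp.toLp 2 w‖ ^ 2 := by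
    rw [← mul_pow]
    exact pow_le_pow_left₀ (norm_nonneg _) (l2_opNorm_mulVec M (WithLp.toLp 2 w)) 2
  have hre : (fun i ↦ ((M.map Complex.ofReal *ᵥ v.ofLp) i).re) = M *ᵥ fun j ↦ (v j).re := by
    ext i; simp [mulVec, dotProduct]
  have him : (fun i ↦ ((M.map Complex.ofReal *ᵥ v.ofLp) i).im) = M *ᵥ fun j ↦ (v j).im := by
    ext i; simp [mulVec, dotProduct]
  calc ‖WithLp.toLp 2 (M.map Complex.ofReal *ᵥ v.ofLp)‖ ^ 2
      = ‖WithLp.toLp 2 (M *ᵥ fun j ↦ (v j).re)‖ ^ 2 +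
        ‖WithLp.toLp 2 (M *ᵥ fun j ↦ (v j).im)‖ ^ 2 := by
        rw [norm_sq_eq_norm_sq_re_add_norm_sq_im, hre, him]
    _ ≤ ‖M‖ ^ 2 * ‖WithLp.toLp 2 fun j ↦ (v j).re‖ ^ 2 +
        ‖M‖ ^ 2 * ‖WithLp.toLp 2 fun j ↦ (v j).im‖ ^ 2 := add_le_add (hM _) (hM _)
    _ = (‖M‖ * ‖v‖) ^ 2 := by
        rw [← mul_add, ← norm_sq_eq_norm_sq_re_add_norm_sq_im, mul_pow]

lemma l2_opNorm_diagonal_mul_mul_diagonal_le [DecidableEq m] (d : m → 𝕜) (F : Matrix m n 𝕜)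
    (e : n → 𝕜) : ‖diagonal d * F * diagonal e‖ ≤ ‖d‖ * ‖F‖ * ‖e‖ :=
  calc ‖diagonal d * F * diagonal e‖ ≤ ‖diagonal d * F‖ * ‖diagonal e‖ := l2_opNorm_mul _ _
    _ ≤ ‖diagonal d‖ * ‖F‖ * ‖diagonal e‖ := by gcongr; exact l2_opNorm_mul _ _
    _ = ‖d‖ * ‖F‖ * ‖e‖ := by rw [l2_opNorm_diagonal, l2_opNorm_diagonal]

lemma l2_opNorm_diagonal_indicator_mul_mul_le {F : Matrix n n 𝕜} {s : Finset n} {x : ℝ}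
    (hF : ∀ i ∈ s, ∀ j ∈ s, ‖F i j‖ ≤ x) (d : n → 𝕜) :
    ‖diagonal ((s : Set n).indicator d) * F * diagonal ((s : Set n).indicator d)‖ ≤
      s.card ^ 2 * x * ‖d‖ ^ 2 := by
  refine (l2_opNorm_le_card_mul_card_mul (s := s) (t := s) (c := ‖d‖ * x * ‖d‖)
    (fun i j hij ↦ ?_) fun i hi j hj ↦ ?_).trans_eq (by ring)
  · rw [mul_diagonal, diagonal_mul] at hij
    exact ⟨Set.mem_of_indicator_ne_zero (left_ne_zero_of_mul (left_ne_zero_of_mul hij)),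
      Set.mem_of_indicator_ne_zero (right_ne_zero_of_mul hij)⟩
  · rw [mul_diagonal, diagonal_mul, Set.indicator_of_mem (Finset.mem_coe.2 hi),
      Set.indicator_of_mem (Finset.mem_coe.2 hj), norm_mul, norm_mul]
    have hx : 0 ≤ x := (norm_nonneg _).trans (hF i hi j hj)
    gcongr
    exacts [norm_le_pi_norm d i, hF i hi j hj, norm_le_pi_norm d j]

lemma l2_opNorm_diagonal_mul_mul_diagonal_le_of_block {F : Matrix n n 𝕜} {s : Finset n} {x : ℝ}
    (hF : ∀ i ∈ s, ∀ j ∈ s, ‖F i j‖ ≤ x) (d : n → 𝕜) :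
    ‖diagonal d * F * diagonal d‖ ≤ s.card ^ 2 * x * ‖d‖ ^ 2 +
      2 * ‖F‖ * ‖d‖ * ‖(s : Set n)ᶜ.indicator d‖ + ‖F‖ * ‖(s : Set n)ᶜ.indicator d‖ ^ 2 := by
  set d₁ := (s : Set n).indicator d with hd₁
  set d₂ := (s : Set n)ᶜ.indicator d with hd₂
  have hsplit : diagonal d * F * diagonal d = diagonal d₁ * F * diagonal d₁ +
      diagonal d₁ * F * diagonal d₂ + diagonal d₂ * F * diagonal d₁ +
      diagonal d₂ * F * diagonal d₂ := by
    have : diagonal d = diagonal d₁ + diagonal d₂ := by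
      rw [diagonal_add, ← Pi.add_def, hd₁, hd₂, Set.indicator_self_add_compl]
    rw [this]
    noncomm_ring
  have hd₁_le : ‖d₁‖ ≤ ‖d‖ := (pi_norm_le_iff_of_nonneg (norm_nonneg d)).2 fun i ↦
    (norm_indicator_le_norm_self d i).trans (norm_le_pi_norm d i)
  calc ‖diagonal d * F * diagonal d‖
      ≤ ‖diagonal d₁ * F * diagonal d₁‖ + ‖diagonal d₁ * F * diagonal d₂‖ +
        ‖diagonal d₂ * F * diagonal d₁‖ + ‖diagonal d₂ * F * diagonal d₂‖ := by
        rw [hsplit]; exact norm_add₄_le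
    _ ≤ s.card ^ 2 * x * ‖d‖ ^ 2 + ‖d₁‖ * ‖F‖ * ‖d₂‖ + ‖d₂‖ * ‖F‖ * ‖d₁‖ +
        ‖d₂‖ * ‖F‖ * ‖d₂‖ := by
        gcongr
        · exact l2_opNorm_diagonal_indicator_mul_mul_le hF d
        all_goals exact l2_opNorm_diagonal_mul_mul_diagonal_le _ _ _
    _ ≤ s.card ^ 2 * x * ‖d‖ ^ 2 + ‖d‖ * ‖F‖ * ‖d₂‖ + ‖d₂‖ * ‖F‖ * ‖d‖ +
        ‖d₂‖ * ‖F‖ * ‖d₂‖ := by gcongr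
    _ = _ := by ring

end L2OpNorm

section Resolvent

open scoped Matrix.Norms.L2Operator

variable {ι : Type*} [Fintype ι] [DecidableEq ι] {n : ℕ} {A : Matrix (Fin n) (Fin n) ℝ}
  {φ : Matrix ι ι ℂ ≃⋆ₐ[ℂ] Matrix (Fin n) (Fin n) ℂ}

lemma res_eq_of_map_ofReal_eq {l : ι → ℂ} (hA : A.map Complex.ofReal = φ (diagonal l)) {z : ℂ}
    (hz : ∀ i, z ≠ l i) : res A z = φ (diagonal fun i ↦ (z - l i)⁻¹) := by
  refine inv_eq_right_inv ?_
  have hsub : z • 1 - A.map Complex.ofReal = φ (diagonal fun i ↦ z - l i) := by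
    rw [hA, ← map_one φ, ← map_smul, ← map_sub, smul_one_eq_diagonal, diagonal_sub]
  have hinv (i : ι) : (z - l i) * (z - l i)⁻¹ = 1 := mul_inv_cancel₀ (sub_ne_zero.2 (hz i))
  simp only [hsub, ← map_mul, diagonal_mul_diagonal, hinv, diagonal_one, map_one]

lemma norm_res_mul_mul_res {l : ι → ℂ} (hA : A.map Complex.ofReal = φ (diagonal l)) {z : ℂ}
    (hz : ∀ i, z ≠ l i) (F : Matrix ι ι ℂ) :
    ‖res A z * φ F * res A z‖ =
      ‖diagonal (fun i ↦ (z - l i)⁻¹) * F * diagonal fun i ↦ (z - l i)⁻¹‖ := by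
  rw [res_eq_of_map_ofReal_eq hA hz, ← map_mul, ← map_mul, StarAlgEquiv.norm_map]

variable {l : ι → ℝ} {F : Matrix ι ι ℂ} {s : Finset ι} {x a b x₀ : ℝ}

lemma norm_res_mul_mul_res_le
    (hA : A.map Complex.ofReal = φ (diagonal fun i ↦ (l i : ℂ)))
    (hx : 0 ≤ x) (hF : ∀ i ∈ s, ∀ j ∈ s, ‖F i j‖ ≤ x)
    (ha : 0 < a) (hla : ∀ i, a ≤ |x₀ - l i|) (hb : 0 < b) (hlb : ∀ i ∉ s, b ≤ |x₀ - l i|)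
    (t : ℝ) :
    ‖res A (x₀ + t * Complex.I) * φ F * res A (x₀ + t * Complex.I)‖ ≤
      s.card ^ 2 * x * (a ^ 2 + t ^ 2)⁻¹ + 2 * ‖F‖ / b * (√(a ^ 2 + t ^ 2))⁻¹ +
        ‖F‖ * (b ^ 2 + t ^ 2)⁻¹ := by
  set d : ι → ℂ := fun i ↦ (x₀ + t * Complex.I - l i)⁻¹
  have hz (i : ι) : (x₀ + t * Complex.I : ℂ) ≠ l i := fun h ↦ by
    have hre : x₀ = l i := by simpa using congrArg Complex.re h
    exact (ha.trans_le (hla i)).ne' (by rw [hre, sub_self, abs_zero])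
  have hd : ‖d‖ ≤ (√(a ^ 2 + t ^ 2))⁻¹ := (pi_norm_le_iff_of_nonneg (by positivity)).2 fun i ↦
    norm_inv_add_mul_I_sub_le ha (hla i) t
  have hd_compl : ‖(s : Set ι)ᶜ.indicator d‖ ≤ (√(b ^ 2 + t ^ 2))⁻¹ := by
    refine (pi_norm_le_iff_of_nonneg (by positivity)).2 fun i ↦ ?_
    rw [norm_indicator_eq_indicator_norm]
    exact Set.indicator_apply_le' (fun hi ↦ norm_inv_add_mul_I_sub_le hb (hlb i hi) t)
      fun _ ↦ by positivity
  have hsqrt : (√(b ^ 2 + t ^ 2))⁻¹ ≤ b⁻¹ :=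
    inv_anti₀ hb (Real.le_sqrt_of_sq_le (le_add_of_nonneg_right (sq_nonneg t)))
  have hinv_sq (c : ℝ) : (√(c ^ 2 + t ^ 2))⁻¹ ^ 2 = (c ^ 2 + t ^ 2)⁻¹ := by
    rw [inv_pow, Real.sq_sqrt (by positivity)]
  calc _ = ‖diagonal d * F * diagonal d‖ := norm_res_mul_mul_res hA hz F
    _ ≤ s.card ^ 2 * x * ‖d‖ ^ 2 + 2 * ‖F‖ * ‖d‖ * ‖(s : Set ι)ᶜ.indicator d‖ +
        ‖F‖ * ‖(s : Set ι)ᶜ.indicator d‖ ^ 2 :=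
        l2_opNorm_diagonal_mul_mul_diagonal_le_of_block hF d
    _ ≤ s.card ^ 2 * x * (√(a ^ 2 + t ^ 2))⁻¹ ^ 2 + 2 * ‖F‖ * (√(a ^ 2 + t ^ 2))⁻¹ * b⁻¹ +
        ‖F‖ * (√(b ^ 2 + t ^ 2))⁻¹ ^ 2 := by
        gcongr
        exact hd_compl.trans hsqrt
    _ = _ := by rw [hinv_sq, hinv_sq]; ring

lemma integral_norm_res_mul_mul_res_le
    (hA : A.map Complex.ofReal = φ (diagonal fun i ↦ (l i : ℂ)))
    (hx : 0 ≤ x) (hF : ∀ i ∈ s, ∀ j ∈ s, ‖F i j‖ ≤ x)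
    (ha : 0 < a) (hla : ∀ i, a ≤ |x₀ - l i|) (hb : 0 < b) (hlb : ∀ i ∉ s, b ≤ |x₀ - l i|)
    {T : ℝ} (hT : 0 ≤ T) :
    ∫ t in (-T)..T, ‖res A (x₀ + t * Complex.I) * φ F * res A (x₀ + t * Complex.I)‖ ≤
      s.card ^ 2 * x * (Real.pi / a) + 4 * ‖F‖ / b * Real.arsinh (T / a) +
        ‖F‖ * (Real.pi / b) := by
  have hcont {c : ℝ} (hc : 0 < c) : Continuous fun t : ℝ ↦ (c ^ 2 + t ^ 2)⁻¹ := by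
    fun_prop (disch := intro; positivity)
  have hcont_sqrt : Continuous fun t : ℝ ↦ (√(a ^ 2 + t ^ 2))⁻¹ := by
    fun_prop (disch := intro; positivity)
  have h₁ := ((hcont ha).const_mul (s.card ^ 2 * x)).intervalIntegrable (μ := MeasureTheory.volume)
    (-T) T
  have h₂ := (hcont_sqrt.const_mul (2 * ‖F‖ / b)).intervalIntegrable (μ := MeasureTheory.volume)
    (-T) T
  have h₃ := ((hcont hb).const_mul ‖F‖).intervalIntegrable (μ := MeasureTheory.volume) (-T) T
  calc _ ≤ ∫ t in (-T)..T, (s.card ^ 2 * x * (a ^ 2 + t ^ 2)⁻¹ +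
        2 * ‖F‖ / b * (√(a ^ 2 + t ^ 2))⁻¹ + ‖F‖ * (b ^ 2 + t ^ 2)⁻¹) := by
        refine (Real.le_norm_self _).trans (intervalIntegral.norm_integral_le_of_norm_le
          (by linarith) (.of_forall fun t _ ↦ ?_) ((h₁.add h₂).add h₃))
        rw [norm_norm]
        exact norm_res_mul_mul_res_le hA hx hF ha hla hb hlb t
    _ = s.card ^ 2 * x * (∫ t in (-T)..T, (a ^ 2 + t ^ 2)⁻¹) +
        4 * ‖F‖ / b * Real.arsinh (T / a) + ‖F‖ * ∫ t in (-T)..T, (b ^ 2 + t ^ 2)⁻¹ := by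
        rw [intervalIntegral.integral_add (h₁.add h₂) h₃, intervalIntegral.integral_add h₁ h₂]
        simp only [intervalIntegral.integral_const_mul]
        rw [integral_inv_sqrt_sq_add_sq ha, neg_div, Real.arsinh_neg]
        ring
    _ ≤ _ := by gcongr <;> exact integral_inv_sq_add_sq_le_pi_div ‹_›

end Resolvent

section Eigenbasis

variable {ι : Type*} [Fintype ι] [DecidableEq ι] {w : ι → ι → ℝ}

/-- The complex unitary matrix whose columns are the members of a real orthonormal basis `w`,
used to diagonalize real symmetric matrices over `ℂ`. -/
def unitaryOfOrthonormal (w : ι → ι → ℝ)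
    (hw : ∀ i j, w i ⬝ᵥ w j = if i = j then 1 else 0) : unitaryGroup ι ℂ :=
  ⟨of fun k i ↦ (w i k : ℂ), mem_unitaryGroup_iff'.2 <| by
    ext i j
    simpa [mul_apply, dotProduct, one_apply, apply_ite Complex.ofReal]
      using congrArg Complex.ofReal (hw i j)⟩

lemma map_ofReal_eq_conjStarAlgAut_diagonal {A : Matrix ι ι ℝ} {l : ι → ℝ}
    (hw : ∀ i j, w i ⬝ᵥ w j = if i = j then 1 else 0) (hA : ∀ i, A *ᵥ w i = l i • w i) :
    A.map Complex.ofReal = Unitary.conjStarAlgAut ℂ _ (unitaryOfOrthonormal w hw)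
      (diagonal fun i ↦ (l i : ℂ)) := by
  set U := unitaryOfOrthonormal w hw
  have hAU : A.map Complex.ofReal * U = U * diagonal fun i ↦ (l i : ℂ) := by
    ext k i
    rw [mul_diagonal]
    simpa [U, unitaryOfOrthonormal, mul_apply, mulVec, dotProduct, mul_comm]
      using congrArg Complex.ofReal (congrFun (hA i) k)
  rw [Unitary.conjStarAlgAut_apply, ← hAU, mul_assoc, Unitary.mul_star_self_of_mem U.2, mul_one]

lemma conjStarAlgAut_symm_map_ofReal_apply (hw : ∀ i j, w i ⬝ᵥ w j = if i = j then 1 else 0)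
    (E : Matrix ι ι ℝ) (i j : ι) :
    (Unitary.conjStarAlgAut ℂ _ (unitaryOfOrthonormal w hw)).symm (E.map Complex.ofReal) i j =
      (w i ⬝ᵥ E *ᵥ w j : ℝ) := by
  rw [Unitary.conjStarAlgAut_symm_apply, mul_assoc, mul_apply]
  simp [unitaryOfOrthonormal, mul_apply, mulVec, dotProduct]

open scoped Matrix.Norms.L2Operator in
lemma integral_norm_res_mul_mul_res_le_of_orthonormal {n : ℕ}
    {A : Matrix (Fin n) (Fin n) ℝ} {w : Fin n → Fin n → ℝ} {l : Fin n → ℝ}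
    (hw : ∀ i j, w i ⬝ᵥ w j = if i = j then 1 else 0)
    (hA : ∀ i, A *ᵥ w i = l i • w i) (E : Matrix (Fin n) (Fin n) ℝ)
    {s : Finset (Fin n)} {x a b x₀ T : ℝ}
    (hx : 0 ≤ x) (hE : ∀ i ∈ s, ∀ j ∈ s, |w i ⬝ᵥ E *ᵥ w j| ≤ x)
    (ha : 0 < a) (hla : ∀ i, a ≤ |x₀ - l i|) (hb : 0 < b) (hlb : ∀ i ∉ s, b ≤ |x₀ - l i|)
    (hT : 0 ≤ T) :
    ∫ t in (-T)..T, ‖res A (x₀ + t * Complex.I) * E.map Complex.ofReal *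
        res A (x₀ + t * Complex.I)‖ ≤
      s.card ^ 2 * x * (Real.pi / a) + 4 * ‖E‖ / b * Real.arsinh (T / a) +
        ‖E‖ * (Real.pi / b) := by
  set φ := Unitary.conjStarAlgAut ℂ _ (unitaryOfOrthonormal w hw) with hφ
  set F := φ.symm (E.map Complex.ofReal) with hF
  have hF_norm : ‖F‖ ≤ ‖E‖ := (StarAlgEquiv.norm_map _ _).trans_le (l2_opNorm_map_ofReal_le E)
  have hF_entry : ∀ i ∈ s, ∀ j ∈ s, ‖F i j‖ ≤ x := fun i hi j hj ↦ by
    rw [hF, hφ, conjStarAlgAut_symm_map_ofReal_apply, Complex.norm_real]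
    exact hE i hi j hj
  have hφF : φ F = E.map Complex.ofReal := φ.apply_symm_apply _
  have harsinh : 0 ≤ Real.arsinh (T / a) := Real.arsinh_nonneg_iff.2 (by positivity)
  have hbound := integral_norm_res_mul_mul_res_le
    (map_ofReal_eq_conjStarAlgAut_diagonal hw hA) hx hF_entry ha hla hb hlb hT
  rw [← hφ, hφF] at hbound
  refine hbound.trans ?_
  gcongr

end Eigenbasis

lemma block_integral_bound_le_log_add_div {δ L σ e y : ℝ} (hδ : 0 < δ) (hδL : δ ≤ L / 4)
    (hLσ : L ≤ σ) (he : 0 ≤ e) (hy : 0 ≤ y) :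
    y * (Real.pi / (δ / 2)) + 4 * e / (3 * L / 8) * Real.arsinh (2 * σ / (δ / 2)) +
      e * (Real.pi / (3 * L / 8)) ≤ 70 * (e / L * Real.log (6 * σ / δ) + y / δ) := by
  have hL : 0 < L := by linarith
  have hs : 4 ≤ σ / δ := by rw [le_div_iff₀ hδ]; linarith
  have hσ : 2 * σ / (δ / 2) = 4 * (σ / δ) := by field_simp; ring
  rw [hσ, mul_div_assoc 6]
  have harsinh : Real.arsinh (4 * (σ / δ)) ≤ 2 * Real.log (6 * (σ / δ)) :=
    arsinh_four_mul_le_two_mul_log (by linarith)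
  have hlog : 1 ≤ Real.log (6 * (σ / δ)) := by
    rw [Real.le_log_iff_exp_le (by linarith)]
    linarith [Real.exp_one_lt_d9]
  calc y * (Real.pi / (δ / 2)) + 4 * e / (3 * L / 8) * Real.arsinh (4 * (σ / δ)) +
        e * (Real.pi / (3 * L / 8))
      ≤ y * (4 / (δ / 2)) + 4 * e / (3 * L / 8) * (2 * Real.log (6 * (σ / δ))) +
        e * (4 / (3 * L / 8)) * Real.log (6 * (σ / δ)) := by
        have hpi := Real.pi_le_four
        refine add_le_add (by gcongr) ((?_ : _ ≤ e * (4 / (3 * L / 8))).trans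
          (le_mul_of_one_le_right (by positivity) hlog))
        gcongr
    _ = 32 * (e / L * Real.log (6 * (σ / δ))) + 8 * (y / δ) := by field_simp; ring
    _ ≤ 70 * (e / L * Real.log (6 * (σ / δ)) + y / δ) := by
        have : 0 ≤ e / L * Real.log (6 * (σ / δ)) := by positivity
        have : 0 ≤ y / δ := by positivity
        linarith

theorem M1_bound_general
    {n : ℕ} (A E : Matrix (Fin n) (Fin n) ℝ) (lam : ℕ → ℝ) (u : ℕ → (Fin n → ℝ))
    (hlam_mono : ∀ i ∈ Finset.Icc 1 n, ∀ j ∈ Finset.Icc 1 n, i ≤ j → lam j ≤ lam i)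
    (hu_on : ∀ i ∈ Finset.Icc 1 n, ∀ j ∈ Finset.Icc 1 n,
      u i ⬝ᵥ u j = if i = j then 1 else 0)
    (hu_eig : ∀ i ∈ Finset.Icc 1 n, A *ᵥ u i = lam i • u i)
    (p : ℕ) (hp1 : 1 ≤ p) (r : ℕ) (hpr : p ≤ r) (hrn : r < n)
    (hr_half : |lam p| / 2 ≤ lam p - lam (r + 1))
    (x : ℝ)
    (hx : x = (Finset.Icc 1 r ×ˢ Finset.Icc 1 r).sup'
      (Finset.Nonempty.product (Finset.nonempty_Icc.mpr (le_trans hp1 hpr))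
        (Finset.nonempty_Icc.mpr (le_trans hp1 hpr)))
      (fun q => |u q.1 ⬝ᵥ E *ᵥ u q.2|))
    (δp : ℝ) (hδp : δp = lam p - lam (p + 1)) (hδp_pos : 0 < δp) (hgap_hi : δp ≤ |lam p| / 4)
    (x₀ T : ℝ) (hx₀ : x₀ = lam p - δp / 2) (hT : T = 2 * specNorm A)
    (M1 : ℝ)
    (hM1 : M1 = ∫ t in (-T)..T, specNorm
      (res A (x₀ + t * Complex.I) * E.map Complex.ofReal
        * res A (x₀ + t * Complex.I))) :
    M1 ≤ 70 * (specNorm E / |lam p| * Real.log (6 * specNorm A / δp)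
      + (r : ℝ) ^ 2 * x / δp) := by
  have hp : p ∈ Finset.Icc 1 n := by grind
  have hsucc (i : Fin n) : i.val + 1 ∈ Finset.Icc 1 n := by grind
  have hanti : AntitoneOn lam (Finset.Icc 1 n) := fun i hi j hj ↦ hlam_mono i hi j hj
  have hnorm : |lam p| ≤ specNorm A :=
    norm_eigenvalue_le_l2_opNorm (fun h ↦ by simpa [h] using hu_on p hp p hp) (hu_eig p hp)
  have hentry : ∀ i ∈ Finset.Icc 1 r, ∀ j ∈ Finset.Icc 1 r, |u i ⬝ᵥ E *ᵥ u j| ≤ x :=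
    fun i hi j hj ↦ hx ▸ Finset.le_sup' (fun q : ℕ × ℕ ↦ |u q.1 ⬝ᵥ E *ᵥ u q.2|)
      (Finset.mk_mem_product hi hj)
  have hx_nonneg : 0 ≤ x := (abs_nonneg _).trans (hentry p (by grind) p (by grind))
  have hnear (i : Fin n) : δp / 2 ≤ |x₀ - lam (i + 1)| := by
    rw [hx₀, hδp]
    exact half_gap_le_abs_midpoint_sub hanti hp (by grind) (hsucc i)
  have hfar (i : Fin n) (hi : r ≤ i) : 3 * |lam p| / 8 ≤ |x₀ - lam (i + 1)| :=
    le_abs.2 (.inl (by linarith [hanti (by grind) (hsucc i) (Nat.succ_le_succ hi)]))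
  have hint := integral_norm_res_mul_mul_res_le_of_orthonormal
    (w := fun i ↦ u (i + 1)) (l := fun i ↦ lam (i + 1)) (s := {i : Fin n | i < r})
    (fun i j ↦ by simp [hu_on _ (hsucc i) _ (hsucc j), Fin.ext_iff])
    (fun i ↦ hu_eig _ (hsucc i)) E hx_nonneg (fun i hi j hj ↦ hentry _ (by grind) _ (by grind))
    (half_pos hδp_pos) hnear (by linarith) (fun i hi ↦ hfar i (by grind))
    (T := T) (by linarith [abs_nonneg (lam p)])
  rw [Fin.card_filter_val_lt, min_eq_right hrn.le, hT] at hint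
  rw [hM1, hT]
  have hE_nonneg : 0 ≤ specNorm E := norm_nonneg _
  exact hint.trans <|
    block_integral_bound_le_log_add_div hδp_pos hgap_hi hnorm hE_nonneg (by positivity)

/-- **Bound on `M₁`** (Lemma 4.1 of the paper). Indices are 1-based;
`σ₁ = ‖A‖`, `x₀ = λ_p − δ_p/2`, `T = 2σ₁`. -/
theorem M1_bound
    {n : ℕ} (A E : Matrix (Fin n) (Fin n) ℝ) (hA : A.IsSymm) (hE : E.IsSymm)
    (lam : ℕ → ℝ) (u : ℕ → (Fin n → ℝ))
    (hlam_mono : ∀ i ∈ Finset.Icc 1 n, ∀ j ∈ Finset.Icc 1 n, i ≤ j → lam j ≤ lam i)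
    (hu_on : ∀ i ∈ Finset.Icc 1 n, ∀ j ∈ Finset.Icc 1 n,
      u i ⬝ᵥ u j = if i = j then 1 else 0)
    (hu_eig : ∀ i ∈ Finset.Icc 1 n, A *ᵥ u i = lam i • u i)
    (p : ℕ) (hp1 : 1 ≤ p) (hpn : p < n)
    (r : ℕ) (hpr : p ≤ r) (hrn : r < n)
    (hr_half : |lam p| / 2 ≤ lam p - lam (r + 1))
    (x : ℝ)
    (hx : x = (Finset.Icc 1 r ×ˢ Finset.Icc 1 r).sup'
      (Finset.Nonempty.product (Finset.nonempty_Icc.mpr (le_trans hp1 hpr))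
        (Finset.nonempty_Icc.mpr (le_trans hp1 hpr)))
      (fun q => |u q.1 ⬝ᵥ E *ᵥ u q.2|))
    (δp : ℝ) (hδp : δp = lam p - lam (p + 1))
    (hE_pos : 0 < specNorm E)
    (hgap_lo : 4 * specNorm E ≤ δp) (hgap_hi : δp ≤ |lam p| / 4)
    (x₀ T : ℝ) (hx₀ : x₀ = lam p - δp / 2) (hT : T = 2 * specNorm A)
    (M1 : ℝ)
    (hM1 : M1 = ∫ t in (-T)..T, specNorm
      (res A (x₀ + t * Complex.I) * E.map Complex.ofReal
        * res A (x₀ + t * Complex.I))) :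
    M1 ≤ 70 * (specNorm E / |lam p| * Real.log (6 * specNorm A / δp)
      + (r : ℝ) ^ 2 * x / δp) := by
  exact M1_bound_general A E lam u hlam_mono hu_on hu_eig p hp1 r hpr hrn hr_half x hx δp hδp
    (by linarith) hgap_hi x₀ T hx₀ hT M1 hM1
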